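/- Let φ(a) = e^{−a²/2}/√(2π) denote the standard normal density and Φ the standard normal cumulative distribution function. Then the function a ↦ a·φ(a)/Φ(−a) is strictly increasing on (0, ∞); consequently, for every β > 0 the equation 2·Φ(−a) = β·a·φ(a) has exactly one solution a in (0, ∞). -/

import Mathlib

open MeasureTheory

/-- The standard normal density `φ(a) = e^{-a²/2} / √(2π)`. -/
noncomputable def stdGaussPDF (a : ℝ) : ℝ := Real.exp (-a ^ 2 / 2) / Real.sqrt (2 * Real.pi)

/-- The standard normal cumulative distribution function `Φ(x) = ∫_{-∞}^x φ(u) du`. -/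
noncomputable def stdGaussCDF (x : ℝ) : ℝ := ∫ u in Set.Iic x, stdGaussPDF u

theorem pdf_pos (a : ℝ) : 0 < stdGaussPDF a := by
  unfold stdGaussPDF
  positivity

theorem pdf_cont : Continuous stdGaussPDF := by
  unfold stdGaussPDF
  fun_prop

theorem pdf_int : Integrable stdGaussPDF := by
  have h := (integrable_exp_neg_mul_sq (b := 1 / 2) (by norm_num)).div_const
    (Real.sqrt (2 * Real.pi))
  refine h.congr (Filter.Eventually.of_forall fun x => ?_)
  simp only [stdGaussPDF]
  congr 2
  ring

theorem cdf_pos (x : ℝ) : 0 < stdGaussCDF x := by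
  unfold stdGaussCDF
  rw [setIntegral_pos_iff_support_of_nonneg_ae
    (Filter.Eventually.of_forall fun y => (pdf_pos y).le) pdf_int.integrableOn]
  have : Function.support stdGaussPDF = Set.univ := by
    ext y
    simp [(pdf_pos y).ne']
  rw [this]
  simp

theorem cdf_cont : Continuous stdGaussCDF := by
  have h : stdGaussCDF = fun x => (∫ u in (0 : ℝ)..x, stdGaussPDF u) + stdGaussCDF 0 := by
    funext x
    have := intervalIntegral.integral_Iic_sub_Iic (a := 0) (b := x)
      (pdf_int.integrableOn) (pdf_int.integrableOn)
    unfold stdGaussCDF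
    linarith
  rw [h]
  exact (intervalIntegral.continuous_primitive (fun a b => pdf_int.intervalIntegrable) 0).add
    continuous_const

theorem cdf_shift (x d : ℝ) : stdGaussCDF (x - d) = ∫ u in Set.Iic x, stdGaussPDF (u - d) := by
  have h := (measurePreserving_sub_right (volume : Measure ℝ) d).setIntegral_preimage_emb
    (measurableEmbedding_subRight d) stdGaussPDF (Set.Iic (x - d))
  rw [stdGaussCDF, ← h]
  congr 2
  ext u
  simp

theorem mills (a b : ℝ) (hab : a ≤ b) :
    stdGaussCDF (-b) * stdGaussPDF a ≤ stdGaussCDF (-a) * stdGaussPDF b := by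
  have e : -b = -a - (b - a) := by ring
  rw [e, cdf_shift, stdGaussCDF, ← integral_mul_const, ← integral_mul_const]
  apply setIntegral_mono_on
  · exact ((pdf_int.comp_sub_right (b - a)).mul_const _).integrableOn
  · exact (pdf_int.mul_const _).integrableOn
  · exact measurableSet_Iic
  · intro u hu
    have hu : u ≤ -a := hu
    unfold stdGaussPDF
    rw [div_mul_div_comm, div_mul_div_comm, ← Real.exp_add, ← Real.exp_add]
    refine div_le_div_of_nonneg_right (Real.exp_le_exp.2 ?_) (by positivity)
    nlinarith [mul_nonneg (sub_nonneg.2 hab) (sub_nonneg.2 hu)]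

/-- The function `a ↦ a φ(a) / Φ(-a)` is strictly increasing on `(0, ∞)`; consequently, for
every `β > 0` the equation `2 Φ(-a) = β a φ(a)` has exactly one solution `a ∈ (0, ∞)`. -/
theorem stmt19 :
    StrictMonoOn (fun a => a * stdGaussPDF a / stdGaussCDF (-a)) (Set.Ioi (0 : ℝ))
    ∧ ∀ β : ℝ, 0 < β →
        ∃! a : ℝ, a ∈ Set.Ioi (0 : ℝ) ∧ 2 * stdGaussCDF (-a) = β * (a * stdGaussPDF a) := by
  have hmono : StrictMonoOn (fun a => a * stdGaussPDF a / stdGaussCDF (-a)) (Set.Ioi (0 : ℝ)) := by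
    intro a ha b hb hab
    have ha : 0 < a := ha
    have hb : 0 < b := hb
    simp only
    rw [div_lt_div_iff₀ (cdf_pos _) (cdf_pos _)]
    have h1 := mul_le_mul_of_nonneg_left (mills a b hab.le) ha.le
    have h2 := mul_lt_mul_of_pos_right hab (mul_pos (cdf_pos (-a)) (pdf_pos b))
    linarith
  refine ⟨hmono, fun β hβ => ?_⟩
  have hcont : Continuous fun a => β * (a * stdGaussPDF a) - 2 * stdGaussCDF (-a) := by
    have h1 := pdf_cont
    have h2 := cdf_cont
    fun_prop
  obtain ⟨M, hM1, hM2⟩ : ∃ M : ℝ, 1 ≤ M ∧ 2 * stdGaussCDF (-1) ≤ M * (β * stdGaussPDF 1) :=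
    ⟨max 1 (2 * stdGaussCDF (-1) / (β * stdGaussPDF 1)), le_max_left _ _,
      (div_le_iff₀ (mul_pos hβ (pdf_pos 1))).1 (le_max_right _ _)⟩
  have hM : 0 ≤ β * (M * stdGaussPDF M) - 2 * stdGaussCDF (-M) := by
    have h1 := mul_le_mul_of_nonneg_left (mills 1 M hM1)
      (show 0 ≤ M * β by positivity)
    have h2 := mul_le_mul_of_nonneg_left hM2 (cdf_pos (-M)).le
    have h3 : 0 ≤ stdGaussCDF (-1) * (β * (M * stdGaussPDF M) - 2 * stdGaussCDF (-M)) := by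
      linarith
    exact nonneg_of_mul_nonneg_right h3 (cdf_pos (-1))
  have h0 : β * (0 * stdGaussPDF 0) - 2 * stdGaussCDF (-0) ≤ 0 := by
    have := cdf_pos (-0)
    linarith
  obtain ⟨a, ⟨ha0, -⟩, ha⟩ := intermediate_value_Icc (show (0 : ℝ) ≤ M by linarith)
    hcont.continuousOn ⟨h0, hM⟩
  simp only at ha
  have hapos : 0 < a := by
    rcases ha0.lt_or_eq with h | h
    · exact h
    · have h1 := cdf_pos (-a)
      have h2 : β * (a * stdGaussPDF a) = 0 := by rw [← h]; ring
      linarith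
  have key : ∀ c : ℝ, 2 * stdGaussCDF (-c) = β * (c * stdGaussPDF c) →
      c * stdGaussPDF c / stdGaussCDF (-c) = 2 / β := by
    intro c hc
    rw [div_eq_div_iff (cdf_pos _).ne' hβ.ne']
    linarith
  have hae : 2 * stdGaussCDF (-a) = β * (a * stdGaussPDF a) := by linarith
  refine ⟨a, ⟨hapos, hae⟩, ?_⟩
  rintro c ⟨hc, hce⟩
  exact hmono.injOn hc hapos ((key c hce).trans (key a hae).symm)
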